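/- Let ρ be a quasi-periodic labelling, and let Γ ≤ G_ρ be a subgroup admitting a global fixed point: there exists x ∈ ℝ with γ(x) = x for every γ ∈ Γ. Then Γ is 2-boundedly acyclic: every bounded 2-cocycle ω : Γ × Γ → ℝ is the coboundary of a bounded function φ : Γ → ℝ. -/

import Mathlib

/-! ### Letters, labellings and quasi-periodicity -/

/-- The four letters `a, b, a⁻¹, b⁻¹`. -/
inductive Letter : Type
  | a : Letter
  | b : Letter
  | A : Letter  -- `a⁻¹`
  | B : Letter  -- `b⁻¹`
  deriving DecidableEq

/-- The formal inverse of a letter. -/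
def Letter.inv : Letter → Letter
  | .a => .A
  | .A => .a
  | .b => .B
  | .B => .b

/-- We encode the set of half-integers `½ℤ` by `ℤ` via `m ↦ m / 2`; integer points
correspond to even indices and proper half-integer points to odd indices.
A labelling assigns `a^{±1}` to integer points and `b^{±1}` to half-integer points. -/
def IsLabelling (ρ : ℤ → Letter) : Prop :=
  ∀ m : ℤ, (Even m → ρ m = Letter.a ∨ ρ m = Letter.A) ∧
    (Odd m → ρ m = Letter.b ∨ ρ m = Letter.B)

/-- The word of the labelling `ρ` along the block `{k, k+1, …, k+n}` (in the
half-integer encoding, the block of size `n+1` starting at `k/2`). -/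
def blockWord (ρ : ℤ → Letter) (k : ℤ) (n : ℕ) : List Letter :=
  (List.range (n + 1)).map fun i => ρ (k + i)

/-- The formal inverse of a word: reverse the word and invert each letter. -/
def wordInv (w : List Letter) : List Letter :=
  (w.map Letter.inv).reverse

/-- A labelling is quasi-periodic if (1) every subword of the labelling appears as a
subword (string of consecutive letters) of every sufficiently large block, and (2) the
formal inverse of every subword of the labelling is again a subword of the labelling. -/
def IsQuasiPeriodic (ρ : ℤ → Letter) : Prop :=
  IsLabelling ρ ∧
    (∀ (k : ℤ) (n : ℕ), ∃ N : ℕ, ∀ (k' : ℤ) (n' : ℕ), N ≤ n' + 1 →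
      (blockWord ρ k n) <:+: (blockWord ρ k' n')) ∧
    (∀ (k : ℤ) (n : ℕ), ∃ k' : ℤ, blockWord ρ k' n = wordInv (blockWord ρ k n))

/-! ### Thompson's group `F` and the subgroup `H`

Orientation-preserving homeomorphisms of `[0,1]` are realised as order-automorphisms
of `ℝ` that are the identity outside `[0,1]`; orientation-preserving homeomorphisms of
the line are order-automorphisms of `ℝ`. -/

/-- A dyadic rational real number, i.e. an element of `ℤ[1/2]`. -/
def IsDyadic (x : ℝ) : Prop :=
  ∃ (a : ℤ) (b : ℕ), x = (a : ℝ) / 2 ^ b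

/-- Membership in Thompson's group `F`: the identity outside `[0,1]`, and on `[0,1]`
piecewise linear with breakpoints in `ℤ[1/2]` and slopes integer powers of `2`. -/
def InThompsonF (f : ℝ ≃o ℝ) : Prop :=
  (∀ x : ℝ, x ∉ Set.Icc (0 : ℝ) 1 → f x = x) ∧
    ∃ (m : ℕ) (x : Fin (m + 1) → ℝ), x 0 = 0 ∧ x (Fin.last m) = 1 ∧ StrictMono x ∧
      (∀ i, IsDyadic (x i)) ∧
      ∀ i : Fin m, ∃ (k : ℤ) (c : ℝ),
        ∀ t ∈ Set.Icc (x i.castSucc) (x i.succ), f t = 2 ^ k * t + c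

/-- Membership in the subgroup `H ≤ F` of elements whose slopes at `0` and `1`
coincide. -/
def InH (f : ℝ ≃o ℝ) : Prop :=
  InThompsonF f ∧
    ∃ (k : ℤ) (ε : ℝ), 0 < ε ∧ (∀ t ∈ Set.Icc (0 : ℝ) ε, f t = 2 ^ k * t) ∧
      ∀ t ∈ Set.Icc (1 - ε) (1 : ℝ), f t = 1 + 2 ^ k * (t - 1)

/-! ### The generators of `G_ρ` -/

/-- `ζ` is the homeomorphism of `ℝ` which on each `[n, n+1]` is the conjugate of `ν`
(a homeomorphism of `[0,1]`) by the orientation-preserving isometry `[n,n+1] → [0,1]`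
if `ρ(n + ½) = b`, and by the orientation-reversing isometry if `ρ(n + ½) = b⁻¹`.
(In the encoding of `½ℤ` by `ℤ`, the point `n + ½` has index `2n + 1`.) -/
def IsZeta (ρ : ℤ → Letter) (ν ζ : ℝ ≃o ℝ) : Prop :=
  ∀ n : ℤ, ∀ x ∈ Set.Icc (n : ℝ) (n + 1),
    (ρ (2 * n + 1) = Letter.b → ζ x = n + ν (x - n)) ∧
    (ρ (2 * n + 1) = Letter.B → ζ x = (n + 1) - ν ((n + 1) - x))

/-- `χ` is the homeomorphism of `ℝ` which on each `[n-½, n+½]` is the conjugate of `ν`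
by the orientation-preserving isometry `[n-½, n+½] → [0,1]` if `ρ(n) = a`, and by the
orientation-reversing isometry if `ρ(n) = a⁻¹`. -/
def IsChi (ρ : ℤ → Letter) (ν χ : ℝ ≃o ℝ) : Prop :=
  ∀ n : ℤ, ∀ x ∈ Set.Icc ((n : ℝ) - 1/2) ((n : ℝ) + 1/2),
    (ρ (2 * n) = Letter.a → χ x = ((n : ℝ) - 1/2) + ν (x - ((n : ℝ) - 1/2))) ∧
    (ρ (2 * n) = Letter.A → χ x = ((n : ℝ) + 1/2) - ν (((n : ℝ) + 1/2) - x))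

/-! ### Bounded cohomology in degree two -/

/-- A bounded 2-cocycle on `G` with trivial real coefficients. -/
def IsBounded2Cocycle {G : Type*} [Group G] (ω : G → G → ℝ) : Prop :=
  (∃ C : ℝ, ∀ g h : G, |ω g h| ≤ C) ∧
    ∀ g₁ g₂ g₃ : G, ω g₂ g₃ - ω (g₁ * g₂) g₃ + ω g₁ (g₂ * g₃) - ω g₁ g₂ = 0

/-- `ω` is the coboundary of a bounded real-valued function. -/
def IsCoboundaryOfBounded {G : Type*} [Group G] (ω : G → G → ℝ) : Prop :=
  ∃ φ : G → ℝ, (∃ C : ℝ, ∀ g : G, |φ g| ≤ C) ∧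
    ∀ g h : G, ω g h = φ h - φ (g * h) + φ g

/-- A group is 2-boundedly acyclic if `H²_b(G; ℝ) = 0`, i.e. every bounded 2-cocycle is
the coboundary of a bounded function. -/
def Is2BoundedlyAcyclic (G : Type*) [Group G] : Prop :=
  ∀ ω : G → G → ℝ, IsBounded2Cocycle ω → IsCoboundaryOfBounded ω

/-- A 2-cocycle is homogeneous if it vanishes on powers of a single element. -/
def IsHomogeneous {G : Type*} [Group G] (ω : G → G → ℝ) : Prop :=
  ∀ (g : G) (i j : ℤ), ω (g ^ i) (g ^ j) = 0

open scoped commutatorElement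

/-! ### Homogeneous quasimorphisms -/

theorem eq_zero_of_nat_mul_bounded (r M : ℝ) (h : ∀ n : ℕ, |(n : ℝ) * r| ≤ M) : r = 0 := by
  by_contra hr
  have hr' : 0 < |r| := abs_pos.mpr hr
  obtain ⟨n, hn⟩ := exists_nat_gt (M / |r|)
  have := h n
  rw [abs_mul, Nat.abs_cast] at this
  rw [div_lt_iff₀ hr'] at hn
  linarith

/-- `q` is a homogeneous quasimorphism of defect at most `D`. -/
structure HQM {E : Type*} [Group E] (q : E → ℝ) (D : ℝ) : Prop where
  qm : ∀ x y, |q (x * y) - q x - q y| ≤ D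
  pow : ∀ x (n : ℕ), q (x ^ n) = n * q x

namespace HQM
variable {E : Type*} [Group E] {q : E → ℝ} {D : ℝ}

theorem one (h : HQM q D) : q 1 = 0 := by
  simpa using h.pow 1 0

theorem comm (h : HQM q D) {x y : E} (hxy : Commute x y) : q (x * y) = q x + q y := by
  have : q (x * y) - q x - q y = 0 := by
    apply eq_zero_of_nat_mul_bounded _ D
    intro n
    have := h.qm (x ^ n) (y ^ n)
    rw [← hxy.mul_pow, h.pow, h.pow, h.pow] at this
    rwa [mul_sub, mul_sub]
  linarith

theorem inv (h : HQM q D) (x : E) : q x⁻¹ = - q x := by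
  have := h.comm (Commute.refl x).inv_right
  rw [mul_inv_cancel, h.one] at this
  linarith

theorem conj (h : HQM q D) (x y : E) : q (y * x * y⁻¹) = q x := by
  have : q (y * x * y⁻¹) - q x = 0 := by
    apply eq_zero_of_nat_mul_bounded _ (2 * D)
    intro n
    have h1 := h.qm (y * x ^ n) y⁻¹
    have h2 := h.qm y (x ^ n)
    have h3 := h.inv y
    rw [← conj_pow, h.pow] at h1
    rw [h.pow] at h2
    rw [h3] at h1
    rw [abs_le] at *
    constructor <;> linarith [h1.1, h1.2, h2.1, h2.2]
  linarith

theorem comm_bound (h : HQM q D) (x y : E) : |q ⁅x, y⁆| ≤ D := by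
  have h1 := h.qm (x * y * x⁻¹) y⁻¹
  rw [h.conj, h.inv] at h1
  rw [commutatorElement_def]
  have e : q (x * y * x⁻¹ * y⁻¹) - q y - -q y = q (x * y * x⁻¹ * y⁻¹) := by ring
  rwa [e] at h1

theorem D_nonneg (h : HQM q D) : 0 ≤ D := (abs_nonneg _).trans (h.qm 1 1)

/-- If `q` vanishes on a normal subgroup `N` containing the commutators of elements of `A`,
then `q` is additive on `A`. -/
theorem add_of_vanish (h : HQM q D) (A N : Subgroup E) (hN : N.Normal)
    (hA : ⁅A, A⁆ ≤ N) (h0 : ∀ n ∈ N, q n = 0) {x y : E} (hx : x ∈ A) (hy : y ∈ A) :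
    q (x * y) = q x + q y := by
  have : q (x * y) - q x - q y = 0 := by
    apply eq_zero_of_nat_mul_bounded _ (2 * D)
    intro n
    have key : ∀ n : ℕ, ∃ m ∈ N, (x * y) ^ n = x ^ n * y ^ n * m := by
      intro n
      have hc : ∀ a ∈ A, ∀ b ∈ A, ((a * b : E) : E ⧸ N) = ((b * a : E) : E ⧸ N) := by
        intro a ha b hb
        rw [QuotientGroup.eq]
        have : ⁅b⁻¹, a⁻¹⁆ ∈ N := hA (Subgroup.commutator_mem_commutator (inv_mem hb) (inv_mem ha))
        simpa [commutatorElement_def, mul_assoc] using this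
      have hcm : Commute (x : E ⧸ N) (y : E ⧸ N) := hc x hx y hy
      refine ⟨(x ^ n * y ^ n)⁻¹ * (x * y) ^ n, ?_, by group⟩
      rw [← QuotientGroup.eq]
      exact (hcm.mul_pow n).symm
    obtain ⟨m, hm, e⟩ := key n
    have h1 := h.qm (x ^ n * y ^ n) m
    have h2 := h.qm (x ^ n) (y ^ n)
    rw [← e, h0 m hm, h.pow] at h1
    rw [h.pow, h.pow] at h2
    rw [abs_le] at *
    constructor <;> linarith [h1.1, h1.2, h2.1, h2.2]
  linarith

/-- If `q` is additive on the commutator subgroup then it vanishes there. -/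
theorem vanish_commutator (h : HQM q D)
    (ha : ∀ x ∈ commutator E, ∀ y ∈ commutator E, q (x * y) = q x + q y) :
    ∀ x ∈ commutator E, q x = 0 := by
  have hc : ∀ a b : E, q ⁅a, b⁆ = 0 := by
    intro a b
    have hmem : ∀ c d : E, ⁅c, d⁆ ∈ commutator E := fun c d =>
      Subgroup.commutator_mem_commutator (Subgroup.mem_top c) (Subgroup.mem_top d)
    have key : ∀ n : ℕ, q ⁅a, b ^ n⁆ = n * q ⁅a, b⁆ := by
      intro n
      induction n with
      | zero => simp [h.one]
      | succ n ih =>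
        have e : ⁅a, b ^ (n + 1)⁆ = ⁅a, b ^ n⁆ * (b ^ n * ⁅a, b⁆ * (b ^ n)⁻¹) := by
          simp only [commutatorElement_def, pow_succ]; group
        rw [e, ha _ (hmem _ _) _ (Subgroup.Normal.conj_mem inferInstance _ (hmem _ _) _),
          h.conj, ih]
        push_cast; ring
    apply eq_zero_of_nat_mul_bounded _ D
    intro n
    rw [← key]
    exact h.comm_bound _ _
  intro x hx'
  rw [commutator_eq_closure] at hx'
  induction hx' using Subgroup.closure_induction with
  | mem x hx => obtain ⟨a, b, rfl⟩ := hx; exact hc a b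
  | one => exact h.one
  | mul x y hx hy ihx ihy =>
    rw [← commutator_eq_closure] at hx hy
    rw [ha x hx y hy, ihx, ihy, add_zero]
  | inv x hx ih =>
    rw [h.inv, ih, neg_zero]

/-- The product of the first `n` conjugates of `a` by powers of `t`. -/
def Phi (t : E) (a : E) : ℕ → E
  | 0 => 1
  | n + 1 => Phi t a n * (t ^ n * a * (t ^ n)⁻¹)

theorem vanish_of_commuting_conjugates (h : HQM q D) (K : Subgroup E) (t : E)
    (hK : ∀ k : ℕ, 1 ≤ k → ∀ u ∈ K, ∀ v ∈ K, Commute u (t ^ k * v * (t ^ k)⁻¹)) :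
    ∀ y ∈ ⁅K, K⁆, q y = 0 := by
  have hij : ∀ i j : ℕ, i < j → ∀ u ∈ K, ∀ v ∈ K,
      Commute (t ^ i * u * (t ^ i)⁻¹) (t ^ j * v * (t ^ j)⁻¹) := by
    intro i j hlt u hu v hv
    obtain ⟨k, rfl⟩ := Nat.exists_eq_add_of_lt hlt
    have := hK (k + 1) (by omega) u hu v hv
    have e : t ^ (i + k + 1) * v * (t ^ (i + k + 1))⁻¹
      = t ^ i * (t ^ (k + 1) * v * (t ^ (k + 1))⁻¹) * (t ^ i)⁻¹ := by
      rw [add_assoc, pow_add]; group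
    rw [e]
    exact (Commute.conj_iff (t ^ i)).mpr this
  have hP : ∀ n j : ℕ, n ≤ j → ∀ u ∈ K, ∀ v ∈ K,
      Commute (Phi t u n) (t ^ j * v * (t ^ j)⁻¹) := by
    intro n
    induction n with
    | zero => intro j _ u _ v _; exact Commute.one_left _
    | succ n ih =>
      intro j hj u hu v hv
      exact (ih j (by omega) u hu v hv).mul_left (hij n j (by omega) u hu v hv)
  have hmul : ∀ n, ∀ u ∈ K, ∀ v ∈ K, Phi t (u * v) n = Phi t u n * Phi t v n := by
    intro n u hu v hv
    induction n with
    | zero => simp [Phi]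
    | succ n ih =>
      simp only [Phi, ih]
      have c := (hP n n le_rfl v hv u hu).eq
      calc Phi t u n * Phi t v n * (t ^ n * (u * v) * (t ^ n)⁻¹)
          = Phi t u n * (Phi t v n * (t ^ n * u * (t ^ n)⁻¹)) * (t ^ n * v * (t ^ n)⁻¹) := by group
        _ = Phi t u n * ((t ^ n * u * (t ^ n)⁻¹) * Phi t v n) * (t ^ n * v * (t ^ n)⁻¹) := by rw [c]
        _ = _ := by group
  have hone : ∀ n, Phi t 1 n = 1 := by
    intro n
    induction n with
    | zero => rfl
    | succ n ih => simp [Phi, ih]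
  have hinv : ∀ n, ∀ u ∈ K, Phi t u⁻¹ n = (Phi t u n)⁻¹ := by
    intro n u hu
    apply eq_inv_of_mul_eq_one_left
    rw [← hmul n _ (inv_mem hu) _ hu, inv_mul_cancel, hone]
  have hq : ∀ n, ∀ u ∈ K, q (Phi t u n) = n * q u := by
    intro n u hu
    induction n with
    | zero => simp [Phi, h.one]
    | succ n ih =>
      simp only [Phi]
      rw [h.comm (hP n n le_rfl u hu u hu), ih, h.conj]
      push_cast; ring
  have hle : ⁅K, K⁆ ≤ K := Subgroup.commutator_le.mpr fun a ha b hb => by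
    rw [commutatorElement_def]
    exact mul_mem (mul_mem (mul_mem ha hb) (inv_mem ha)) (inv_mem hb)
  have hb : ∀ y ∈ ⁅K, K⁆, ∃ M, ∀ n, |q (Phi t y n)| ≤ M := by
    intro y hy
    rw [Subgroup.commutator_def] at hy
    have hcl : ∀ y ∈ Subgroup.closure {g | ∃ g₁ ∈ K, ∃ g₂ ∈ K, ⁅g₁, g₂⁆ = g}, y ∈ K := by
      intro y hy
      rw [← Subgroup.commutator_def] at hy
      exact hle hy
    induction hy using Subgroup.closure_induction with
    | mem x hx =>
      obtain ⟨a, ha, b, hb, rfl⟩ := hx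
      refine ⟨D, fun n => ?_⟩
      have : Phi t ⁅a, b⁆ n = ⁅Phi t a n, Phi t b n⁆ := by
        rw [commutatorElement_def, commutatorElement_def,
          hmul n _ (mul_mem (mul_mem ha hb) (inv_mem ha)) _ (inv_mem hb),
          hmul n _ (mul_mem ha hb) _ (inv_mem ha), hmul n _ ha _ hb, hinv n _ ha, hinv n _ hb]
      rw [this]
      exact h.comm_bound _ _
    | one => exact ⟨0, fun n => by rw [hone, h.one, abs_zero]⟩
    | mul x y hx hy ihx ihy =>
      obtain ⟨M, hM⟩ := ihx
      obtain ⟨M', hM'⟩ := ihy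
      refine ⟨M + M' + D, fun n => ?_⟩
      rw [hmul n x (hcl x hx) y (hcl y hy)]
      have h1 := h.qm (Phi t x n) (Phi t y n)
      have h2 := hM n
      have h3 := hM' n
      rw [abs_le] at *
      constructor <;> linarith [h1.1, h1.2, h2.1, h2.2, h3.1, h3.2]
    | inv x hx ih =>
      obtain ⟨M, hM⟩ := ih
      refine ⟨M, fun n => ?_⟩
      rw [hinv n x (hcl x hx), h.inv, abs_neg]
      exact hM n
  intro y hy
  obtain ⟨M, hM⟩ := hb y hy
  apply eq_zero_of_nat_mul_bounded _ M
  intro n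
  rw [← hq n y (hle hy)]
  exact hM n

end HQM

/-- Homogenization of a quasimorphism. -/
theorem exists_homogenization {E : Type*} [Group E] (q : E → ℝ) (C : ℝ)
    (hq : ∀ x y, |q (x * y) - q x - q y| ≤ C) :
    ∃ p : E → ℝ, (∀ x, |p x - q x| ≤ C) ∧ HQM p (4 * C) := by
  have hC : 0 ≤ C := (abs_nonneg _).trans (hq 1 1)
  have hpow : ∀ x (n : ℕ), |q (x ^ (n + 1)) - (n + 1) * q x| ≤ n * C := by
    intro x n
    induction n with
    | zero => simp
    | succ n ih =>
      have := hq (x ^ (n + 1)) x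
      rw [← pow_succ] at this
      push_cast
      rw [abs_le] at *
      constructor <;> linarith [ih.1, ih.2, this.1, this.2]
  have hlim : ∀ x, ∃ l, Filter.Tendsto (fun n : ℕ => q (x ^ n) / n) Filter.atTop (nhds l) := by
    intro x
    have hs : Subadditive (fun n : ℕ => q (x ^ n) + C) := by
      intro m n
      have := hq (x ^ m) (x ^ n)
      rw [← pow_add, abs_le] at this
      show q (x ^ (m + n)) + C ≤ _
      linarith [this.2]
    have hbd : BddBelow (Set.range fun n : ℕ => (q (x ^ n) + C) / n) := by
      refine ⟨-(|q x| + C), ?_⟩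
      rintro _ ⟨n, rfl⟩
      show _ ≤ (q (x ^ n) + C) / n
      rcases n with _ | n
      · simp only [Nat.cast_zero, div_zero]; linarith [abs_nonneg (q x)]
      · have h1 := hpow x n
        rw [le_div_iff₀ (by positivity)]
        push_cast
        rw [abs_le] at h1
        have h2 := neg_abs_le (q x)
        nlinarith [h1.1, h1.2, mul_le_mul_of_nonneg_left h2 (by positivity : (0:ℝ) ≤ (n:ℝ) + 1)]
    refine ⟨hs.lim - 0, ?_⟩
    have h1 := hs.tendsto_lim hbd
    have h2 := tendsto_const_div_atTop_nhds_zero_nat C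
    have h3 := h1.sub h2
    refine h3.congr fun n => ?_
    rw [← sub_div]; congr 1; ring
  choose p hp using hlim
  have hpq : ∀ x, |p x - q x| ≤ C := by
    intro x
    have h1 := ((hp x).sub_const (q x)).abs
    refine le_of_tendsto h1 ?_
    filter_upwards [Filter.eventually_ge_atTop 1] with n hn
    obtain ⟨n, rfl⟩ := Nat.exists_eq_add_of_le' hn
    have h2 := hpow x n
    have hpos : (0:ℝ) < ((n + 1 : ℕ) : ℝ) := by positivity
    have e : q (x ^ (n + 1)) / ((n + 1 : ℕ) : ℝ) - q x
      = (q (x ^ (n + 1)) - (n + 1) * q x) / ((n + 1 : ℕ) : ℝ) := by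
      field_simp; push_cast; ring
    rw [e, abs_div, abs_of_pos hpos, div_le_iff₀ hpos]
    push_cast
    linarith
  refine ⟨p, hpq, ?_, ?_⟩
  · intro x y
    have h1 := hq x y
    have h2 := hpq x
    have h3 := hpq y
    have h4 := hpq (x * y)
    rw [abs_le] at *
    constructor <;> linarith [h1.1, h1.2, h2.1, h2.2, h3.1, h3.2, h4.1, h4.2]
  · intro x n
    rcases Nat.eq_zero_or_pos n with rfl | hn
    · have h1 := hp 1
      have h2 := tendsto_const_div_atTop_nhds_zero_nat (q 1)
      simp only [one_pow] at h1
      simpa using tendsto_nhds_unique h1 h2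
    · have h1 := hp (x ^ n)
      have h2 : Filter.Tendsto (fun m : ℕ => n * (q (x ^ (n * m)) / ((n * m : ℕ) : ℝ)))
          Filter.atTop (nhds (n * p x)) := by
        refine Filter.Tendsto.const_mul _ ((hp x).comp ?_)
        exact Filter.tendsto_id.const_mul_atTop' hn
      refine tendsto_nhds_unique h1 (h2.congr fun m => ?_)
      rw [pow_mul]
      have : (n : ℝ) ≠ 0 := by positivity
      rcases Nat.eq_zero_or_pos m with rfl | hm
      · simp
      · have : (m : ℝ) ≠ 0 := by positivity
        push_cast; field_simp

/-! ### The central extension attached to a cocycle -/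

/-- The underlying set of the central extension. -/
@[ext]
structure CExt {Γ : Type*} (ω : Γ → Γ → ℝ) where
  fst : Γ
  snd : ℝ

theorem mem_commutator_finite {G : Type*} [Group G] (A : Subgroup G) {y : G} (hy : y ∈ ⁅A, A⁆) :
    ∃ T : Set G, T.Finite ∧ T ⊆ A ∧ y ∈ ⁅Subgroup.closure T, Subgroup.closure T⁆ := by
  rw [Subgroup.commutator_def] at hy
  induction hy using Subgroup.closure_induction with
  | mem x hx =>
    obtain ⟨a, ha, b, hb, rfl⟩ := hx
    refine ⟨{a, b}, by simp, ?_, ?_⟩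
    · rintro z (rfl | rfl) <;> assumption
    · exact Subgroup.commutator_mem_commutator (Subgroup.subset_closure (by simp))
        (Subgroup.subset_closure (by simp))
  | one => exact ⟨∅, Set.finite_empty, Set.empty_subset _, one_mem _⟩
  | mul x y _ _ ihx ihy =>
    obtain ⟨S, hS, hSA, hx⟩ := ihx
    obtain ⟨T, hT, hTA, hy⟩ := ihy
    refine ⟨S ∪ T, hS.union hT, Set.union_subset hSA hTA, mul_mem ?_ ?_⟩
    · have := Subgroup.closure_mono (Set.subset_union_left (s := S) (t := T))
      exact Subgroup.commutator_mono this this hx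
    · have := Subgroup.closure_mono (Set.subset_union_right (s := S) (t := T))
      exact Subgroup.commutator_mono this this hy
  | inv x _ ih =>
    obtain ⟨S, hS, hSA, hx⟩ := ih
    exact ⟨S, hS, hSA, inv_mem hx⟩

theorem acyclic_of_commuting_conjugates {Γ : Type*} [Group Γ]
    (hCC : ∀ T : Set Γ, T.Finite → T ⊆ commutator Γ → ∃ t : Γ, ∀ k : ℕ, 1 ≤ k →
      ∀ u ∈ Subgroup.closure T, ∀ v ∈ Subgroup.closure T, Commute u (t ^ k * v * (t ^ k)⁻¹)) :
    Is2BoundedlyAcyclic Γ := by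
  rintro ω ⟨⟨C, hC⟩, hω⟩
  set c := ω 1 1 with hc
  have h1l : ∀ g, ω 1 g = c := by
    intro g; have := hω 1 1 g; simp only [one_mul] at this; linarith
  have h1r : ∀ g, ω g 1 = c := by
    intro g; have := hω g 1 1; simp only [mul_one] at this; linarith
  let _ : Mul (CExt ω) := ⟨fun x y => ⟨x.fst * y.fst, x.snd + y.snd + ω x.fst y.fst⟩⟩
  let _ : One (CExt ω) := ⟨⟨1, -c⟩⟩
  let _ : Inv (CExt ω) := ⟨fun x => ⟨x.fst⁻¹, -c - x.snd - ω x.fst⁻¹ x.fst⟩⟩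
  have hmf : ∀ x y : CExt ω, (x * y).fst = x.fst * y.fst := fun _ _ => rfl
  have hms : ∀ x y : CExt ω, (x * y).snd = x.snd + y.snd + ω x.fst y.fst := fun _ _ => rfl
  have h1f : (1 : CExt ω).fst = 1 := rfl
  have h1s : (1 : CExt ω).snd = -c := rfl
  let _ : Group (CExt ω) := Group.ofLeftAxioms
    (by
      intro x y z
      ext
      · simp only [hmf, mul_assoc]
      · simp only [hms, hmf]
        linarith [hω x.fst y.fst z.fst])
    (by
      intro x
      ext
      · rw [hmf, h1f, one_mul]
      · rw [hms, h1f, h1s, h1l]; ring)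
    (by
      intro x
      ext
      · show x.fst⁻¹ * x.fst = 1
        simp
      · show -c - x.snd - ω x.fst⁻¹ x.fst + x.snd + ω x.fst⁻¹ x.fst = -c
        ring)
  let π : CExt ω →* Γ := { toFun := CExt.fst, map_one' := rfl, map_mul' := fun _ _ => rfl }
  have hπ : ∀ x, π x = x.fst := fun _ => rfl
  obtain ⟨q, hqb, hq⟩ := exists_homogenization (fun x : CExt ω => x.snd) C (by
    intro x y
    have : (x * y).snd - x.snd - y.snd = ω x.fst y.fst := by rw [hms]; ring
    rw [this]; exact hC _ _)
  -- the central elements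
  have hcen : ∀ (x : CExt ω) (s : ℝ), Commute x ⟨1, s⟩ := by
    intro x s
    show _ * _ = _ * _
    ext
    · simp [hmf]
    · simp only [hms, h1l, h1r]; ring
  have hzpow : ∀ (s : ℝ) (n : ℕ), (⟨1, s⟩ : CExt ω) ^ n = ⟨1, n * (s + c) - c⟩ := by
    intro s n
    induction n with
    | zero => rw [pow_zero]; ext <;> simp [h1f, h1s]
    | succ n ih =>
      rw [pow_succ, ih]
      ext
      · simp [hmf]
      · simp only [hms, h1l]; push_cast; ring
  have hqz : ∀ s : ℝ, q ⟨1, s⟩ = s + c := by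
    intro s
    have : q ⟨1, s⟩ - (s + c) = 0 := by
      apply eq_zero_of_nat_mul_bounded _ (C + |c|)
      intro n
      have h1 := hqb ((⟨1, s⟩ : CExt ω) ^ n)
      rw [hq.pow, hzpow] at h1
      have h2 := neg_abs_le c
      have h3 := le_abs_self c
      rw [abs_le] at *
      constructor <;> linarith [h1.1, h1.2]
    linarith
  have hqs : ∀ (g : Γ) (s : ℝ), q ⟨g, s⟩ = q ⟨g, 0⟩ + s := by
    intro g s
    have e : (⟨g, s⟩ : CExt ω) = ⟨g, 0⟩ * ⟨1, s - c⟩ := by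
      ext
      · simp [hmf]
      · simp only [hms, h1r]; ring
    rw [e, hq.comm (hcen _ _), hqz]; ring
  -- commuting elements lift to commuting elements
  have hlift : ∀ x y : CExt ω, Commute (π x) (π y) → Commute x y := by
    intro x y hxy
    have hf : (x * y * x⁻¹).fst = y.fst := by
      have : π (x * y * x⁻¹) = π y := by
        rw [map_mul, map_mul, map_inv, hxy.eq, mul_inv_cancel_right]
      exact this
    have hcj := hq.conj y x
    have e1 : q (x * y * x⁻¹) = q ⟨y.fst, 0⟩ + (x * y * x⁻¹).snd := by
      rw [← hqs, ← hf]
    have e2 : q y = q ⟨y.fst, 0⟩ + y.snd := by rw [← hqs]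
    have : x * y * x⁻¹ = y := by
      ext
      · exact hf
      · linarith
    exact mul_inv_eq_iff_eq_mul.mp this
  -- vanishing on the second derived subgroup
  have hvan2 : ∀ y ∈ ⁅commutator (CExt ω), commutator (CExt ω)⁆, q y = 0 := by
    intro y hy
    obtain ⟨T, hT, hTc, hyT⟩ := mem_commutator_finite _ hy
    have hsurj : Function.Surjective π := fun g => ⟨⟨g, 0⟩, rfl⟩
    obtain ⟨t, ht⟩ := hCC (π '' T) (hT.image π) (by
      rintro _ ⟨x, hx, rfl⟩
      have h1 : π x ∈ (commutator (CExt ω)).map π := Subgroup.mem_map_of_mem _ (hTc hx)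
      rw [commutator_def, Subgroup.map_commutator] at h1
      exact Subgroup.commutator_mono le_top le_top h1)
    refine hq.vanish_of_commuting_conjugates (Subgroup.closure T) ⟨t, 0⟩ ?_ y hyT
    intro k hk u hu v hv
    apply hlift
    have hmem : ∀ w ∈ Subgroup.closure T, π w ∈ Subgroup.closure (π '' T) := by
      intro w hw
      rw [← MonoidHom.map_closure]
      exact Subgroup.mem_map_of_mem _ hw
    have := ht k hk (π u) (hmem u hu) (π v) (hmem v hv)
    simp only [map_mul, map_inv, map_pow]
    exact this
  have hvan1 : ∀ y ∈ commutator (CExt ω), q y = 0 := by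
    apply hq.vanish_commutator
    intro x hx y hy
    exact hq.add_of_vanish (commutator (CExt ω)) _ inferInstance le_rfl hvan2 hx hy
  have hadd : ∀ x y : CExt ω, q (x * y) = q x + q y := by
    intro x y
    exact hq.add_of_vanish ⊤ (commutator (CExt ω)) inferInstance le_rfl hvan1
      (Subgroup.mem_top x) (Subgroup.mem_top y)
  refine ⟨fun g => q ⟨g, 0⟩, ⟨C, fun g => ?_⟩, fun g h => ?_⟩
  · simpa using hqb ⟨g, 0⟩
  · have h1 := hadd ⟨g, 0⟩ ⟨h, 0⟩
    have e : (⟨g, 0⟩ * ⟨h, 0⟩ : CExt ω) = ⟨g * h, ω g h⟩ := by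
      ext
      · rfl
      · simp [hms]
    rw [e, hqs] at h1
    show _ = q ⟨h, 0⟩ - q ⟨g * h, 0⟩ + q ⟨g, 0⟩
    linarith

/-! ### Displacing intervals -/

/-- The interval `[c.1, c.2]` contains no global fixed point of `Γ`. -/
def GoodIv (Γ : Subgroup (ℝ ≃o ℝ)) (c : ℝ × ℝ) : Prop :=
  c.1 ≤ c.2 ∧ ∀ z ∈ Set.Icc c.1 c.2, ¬ ∀ γ ∈ Γ, γ z = z

theorem exists_displace_one (Γ : Subgroup (ℝ ≃o ℝ)) (c : ℝ × ℝ) (hc : GoodIv Γ c) :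
    ∃ h ∈ Γ, c.2 < h c.1 := by
  by_contra hcon
  push Not at hcon
  let O : Set ℝ := {y | ∃ h ∈ Γ, h c.1 = y}
  have hne : O.Nonempty := ⟨c.1, 1, one_mem _, rfl⟩
  have hbd : BddAbove O := ⟨c.2, by rintro _ ⟨h, hh, rfl⟩; exact hcon h hh⟩
  have hl := isLUB_csSup hne hbd
  refine hc.2 (sSup O) ⟨hl.1 ⟨1, one_mem _, rfl⟩, hl.2 ?_⟩ ?_
  · rintro _ ⟨h, hh, rfl⟩; exact hcon h hh
  · intro γ hγ
    have h1 : IsLUB (γ '' O) (γ (sSup O)) := γ.isLUB_image'.mpr hl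
    have h2 : γ '' O = O := by
      ext y
      constructor
      · rintro ⟨_, ⟨h, hh, rfl⟩, rfl⟩
        exact ⟨γ * h, mul_mem hγ hh, rfl⟩
      · rintro ⟨h, hh, rfl⟩
        refine ⟨γ⁻¹ (h c.1), ⟨γ⁻¹ * h, mul_mem (inv_mem hγ) hh, rfl⟩, ?_⟩
        exact RelIso.apply_inv_self _ _
    rw [h2] at h1
    exact h1.unique hl

theorem exists_displace (Γ : Subgroup (ℝ ≃o ℝ)) (n : ℕ) : ∀ L : List (ℝ × ℝ), L.length = n →
    (∀ c ∈ L, GoodIv Γ c) → ∃ t ∈ Γ, ∀ c ∈ L, c.2 < t c.1 ∨ t c.2 < c.1 := by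
  induction n with
  | zero =>
    intro L hL _
    refine ⟨1, one_mem _, ?_⟩
    rw [List.length_eq_zero_iff] at hL
    subst hL
    simp
  | succ n ih =>
    intro L hL hgood
    obtain ⟨d, L, rfl⟩ : ∃ d L', L = d :: L' := by
      cases L with
      | nil => simp at hL
      | cons d L' => exact ⟨d, L', rfl⟩
    obtain ⟨h, hh, hd⟩ := exists_displace_one Γ d (hgood d (by simp))
    let en : ℝ × ℝ → ℝ × ℝ := fun c =>
      (min c.1 (min (h c.1) (h⁻¹ c.1)), max c.2 (max (h c.2) (h⁻¹ c.2)))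
    obtain ⟨g, hg, hgL⟩ := ih (L.map en) (by simpa using hL) (by
      intro c' hc'
      rw [List.mem_map] at hc'
      obtain ⟨c, hc, rfl⟩ := hc'
      have hgc := hgood c (List.mem_cons_of_mem _ hc)
      refine ⟨(min_le_left _ _).trans (hgc.1.trans (le_max_left _ _)), ?_⟩
      intro z hz hfix
      have hz1 : min c.1 (min (h c.1) (h⁻¹ c.1)) ≤ z := hz.1
      have hz2 : z ≤ max c.2 (max (h c.2) (h⁻¹ c.2)) := hz.2
      have f1 := hfix h hh
      have f2 := hfix h⁻¹ (inv_mem hh)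
      refine hgc.2 z ⟨?_, ?_⟩ hfix
      · by_contra hlt
        push Not at hlt
        have a1 := h.strictMono hlt
        have a2 := (h⁻¹ : ℝ ≃o ℝ).strictMono hlt
        rw [f1] at a1
        rw [f2] at a2
        exact absurd hz1 (not_le.mpr (lt_min hlt (lt_min a1 a2)))
      · by_contra hlt
        push Not at hlt
        have a1 := h.strictMono hlt
        have a2 := (h⁻¹ : ℝ ≃o ℝ).strictMono hlt
        rw [f1] at a1
        rw [f2] at a2
        exact absurd hz2 (not_le.mpr (max_lt hlt (max_lt a1 a2))))
    have hen : ∀ c ∈ L, (en c).2 < g (en c).1 ∨ g (en c).2 < (en c).1 := fun c hc =>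
      hgL (en c) (List.mem_map_of_mem hc)
    have e1 : ∀ c, (en c).1 ≤ c.1 := fun c => min_le_left _ _
    have e2 : ∀ c, (en c).1 ≤ h c.1 := fun c => (min_le_right _ _).trans (min_le_left _ _)
    have e3 : ∀ c, (en c).1 ≤ h⁻¹ c.1 := fun c => (min_le_right _ _).trans (min_le_right _ _)
    have e4 : ∀ c, c.2 ≤ (en c).2 := fun c => le_max_left _ _
    have e5 : ∀ c, h c.2 ≤ (en c).2 := fun c => (le_max_left _ _).trans (le_max_right _ _)
    have e6 : ∀ c, h⁻¹ c.2 ≤ (en c).2 := fun c => (le_max_right _ _).trans (le_max_right _ _)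
    by_cases hcase : g (h⁻¹ d.2) < d.1
    · refine ⟨g * h⁻¹, mul_mem hg (inv_mem hh), ?_⟩
      intro c hc
      rw [RelIso.mul_apply, RelIso.mul_apply]
      rcases List.mem_cons.mp hc with rfl | hc
      · exact Or.inr hcase
      · rcases hen c hc with h1 | h1
        · left
          exact (e4 c).trans_lt (h1.trans_le (g.monotone (e3 c)))
        · right
          exact (g.monotone (e6 c)).trans_lt (h1.trans_le (e1 c))
    · push Not at hcase
      refine ⟨h * g, mul_mem hh hg, ?_⟩
      intro c hc
      rw [RelIso.mul_apply, RelIso.mul_apply]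
      rcases List.mem_cons.mp hc with rfl | hc
      · left
        have h1 : h⁻¹ c.2 < c.1 := by
          have := (h⁻¹ : ℝ ≃o ℝ).strictMono hd
          rwa [RelIso.inv_apply_self] at this
        have h2 : c.1 < g c.1 := hcase.trans_lt (g.strictMono h1)
        exact hd.trans (h.strictMono h2)
      · rcases hen c hc with h1 | h1
        · left
          have h2 : h⁻¹ c.2 < g c.1 := (e6 c).trans_lt (h1.trans_le (g.monotone (e1 c)))
          have := h.strictMono h2
          rwa [RelIso.apply_inv_self] at this
        · right
          have h2 : g c.2 < h⁻¹ c.1 := (g.monotone (e4 c)).trans_lt (h1.trans_le (e3 c))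
          have := h.strictMono h2
          rwa [RelIso.apply_inv_self] at this

theorem displace_pow (t : ℝ ≃o ℝ) (a b : ℝ) (hab : a ≤ b) (h : b < t a ∨ t b < a) (k : ℕ) :
    b < (t ^ (k + 1)) a ∨ (t ^ (k + 1)) b < a := by
  rcases h with h | h
  · left
    induction k with
    | zero => simpa using h
    | succ k ih =>
      rw [pow_succ', RelIso.mul_apply]
      exact h.trans (t.strictMono (hab.trans_lt ih))
  · right
    induction k with
    | zero => simpa using h
    | succ k ih =>
      rw [pow_succ', RelIso.mul_apply]
      exact (t.strictMono (ih.trans_le hab)).trans h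

/-- The geometric source of commuting conjugates. -/
theorem exists_commuting_conjugator (Γ K : Subgroup (ℝ ≃o ℝ)) (hK : K ≤ Γ) (p q : ℝ)
    (hp : ∀ γ ∈ Γ, γ p = p) (hq : ∀ γ ∈ Γ, γ q = q)
    (hfaith : ∀ γ ∈ Γ, (∀ y ∈ Set.Icc p q, γ y = y) → γ = 1)
    (hgerm : ∀ z, (∀ γ ∈ Γ, γ z = z) → ∀ᶠ y in nhds z, ∀ u ∈ K, u y = y) :
    ∃ t ∈ Γ, ∀ k : ℕ, 1 ≤ k → ∀ u ∈ K, ∀ v ∈ K, Commute u (t ^ k * v * (t ^ k)⁻¹) := by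
  classical
  have hcover : ∃ L : List (ℝ × ℝ), (∀ c ∈ L, GoodIv Γ c) ∧
      ∀ y ∈ Set.Icc p q, (∃ c ∈ L, y ∈ Set.Icc c.1 c.2) ∨ ∀ u ∈ K, u y = y := by
    refine IsCompact.induction_on (p := fun s => ∃ L : List (ℝ × ℝ), (∀ c ∈ L, GoodIv Γ c) ∧
      ∀ y ∈ s, (∃ c ∈ L, y ∈ Set.Icc c.1 c.2) ∨ ∀ u ∈ K, u y = y)
      (isCompact_Icc (a := p) (b := q)) ?_ ?_ ?_ ?_
    · exact ⟨[], by simp, by simp⟩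
    · rintro s t hst ⟨L, h1, h2⟩
      exact ⟨L, h1, fun y hy => h2 y (hst hy)⟩
    · rintro s t ⟨L, h1, h2⟩ ⟨L', h1', h2'⟩
      refine ⟨L ++ L', ?_, ?_⟩
      · intro c hc
        rcases List.mem_append.mp hc with hc | hc
        · exact h1 c hc
        · exact h1' c hc
      · rintro y (hy | hy)
        · rcases h2 y hy with ⟨c, hc, hyc⟩ | h
          · exact Or.inl ⟨c, List.mem_append_left _ hc, hyc⟩
          · exact Or.inr h
        · rcases h2' y hy with ⟨c, hc, hyc⟩ | h
          · exact Or.inl ⟨c, List.mem_append_right _ hc, hyc⟩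
          · exact Or.inr h
    · intro z _
      by_cases hz : ∀ γ ∈ Γ, γ z = z
      · exact ⟨_, mem_nhdsWithin_of_mem_nhds (hgerm z hz), [], by simp, fun y hy => Or.inr hy⟩
      · push Not at hz
        obtain ⟨γ, hγ, hne⟩ := hz
        have hev : ∀ᶠ y in nhds z, γ y ≠ y := 
          (isOpen_ne_fun γ.continuous continuous_id).mem_nhds hne
        obtain ⟨ε, hε, hball⟩ := Metric.nhds_basis_closedBall.eventually_iff.mp hev
        refine ⟨Metric.closedBall z ε, mem_nhdsWithin_of_mem_nhds
          (Metric.closedBall_mem_nhds z hε), [(z - ε, z + ε)], ?_, ?_⟩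
        · intro c hc
          rw [List.mem_singleton] at hc
          subst hc
          refine ⟨by simp only; linarith, ?_⟩
          intro w hw hfix
          rw [← Real.closedBall_eq_Icc] at hw
          exact hball hw (hfix γ hγ)
        · intro y hy
          rw [Real.closedBall_eq_Icc] at hy
          exact Or.inl ⟨_, List.mem_singleton_self _, hy⟩
  obtain ⟨L, hL, hcov⟩ := hcover
  let hull : (ℝ × ℝ) × (ℝ × ℝ) → ℝ × ℝ := fun cd => (min cd.1.1 cd.2.1, max cd.1.2 cd.2.2)
  let L2 : List (ℝ × ℝ) := ((L ×ˢ L).map hull).filter (fun c => decide (GoodIv Γ c))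
  obtain ⟨t, ht, htL⟩ := exists_displace Γ _ L2 rfl (by
    intro c hc
    have := (List.mem_filter.mp hc).2
    simpa using this)
  have hpowmem : ∀ k : ℕ, t ^ k ∈ Γ := fun k => pow_mem ht k
  have hdis : ∀ k : ℕ, ∀ c ∈ L, ∀ d ∈ L, ∀ y ∈ Set.Icc c.1 c.2,
      (t ^ (k + 1)) y ∉ Set.Icc d.1 d.2 := by
    intro k c hc d hd y hy hy'
    by_cases hg : GoodIv Γ (hull (c, d))
    · have hmem : hull (c, d) ∈ L2 := by
        refine List.mem_filter.mpr ⟨List.mem_map_of_mem (List.mem_product.mpr ⟨hc, hd⟩), ?_⟩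
        simpa using hg
      have a1 : (hull (c, d)).1 ≤ y := (min_le_left _ _).trans hy.1
      have a2 : y ≤ (hull (c, d)).2 := hy.2.trans (le_max_left _ _)
      have a3 : (hull (c, d)).1 ≤ (t ^ (k + 1)) y := (min_le_right _ _).trans hy'.1
      have a4 : (t ^ (k + 1)) y ≤ (hull (c, d)).2 := hy'.2.trans (le_max_right _ _)
      rcases displace_pow t _ _ hg.1 (htL _ hmem) k with h | h
      · linarith [(t ^ (k + 1)).monotone a1]
      · linarith [(t ^ (k + 1)).monotone a2]
    · have hgc := hL c hc
      have hgd := hL d hd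
      unfold GoodIv at hg
      push Not at hg
      obtain ⟨z, hz, hfix⟩ := hg ((min_le_left _ _).trans (hgc.1.trans (le_max_left _ _)))
      have hz1 : min c.1 d.1 ≤ z := hz.1
      have hz2 : z ≤ max c.2 d.2 := hz.2
      have b1 : ¬ (c.1 ≤ z ∧ z ≤ c.2) := fun h => hgc.2 z h hfix
      have b2 : ¬ (d.1 ≤ z ∧ z ≤ d.2) := fun h => hgd.2 z h hfix
      have hfz := hfix _ (hpowmem (k + 1))
      rcases lt_or_ge z c.1 with h | h
      · have := (t ^ (k + 1)).strictMono (h.trans_le hy.1)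
        rw [hfz] at this
        rcases min_le_iff.mp hz1 with h' | h'
        · linarith
        · exact b2 ⟨h', (this.trans_le hy'.2).le⟩
      · have h2 : c.2 < z := by
          by_contra hcon
          exact b1 ⟨h, not_lt.mp hcon⟩
        have := (t ^ (k + 1)).strictMono (hy.2.trans_lt h2)
        rw [hfz] at this
        rcases le_max_iff.mp hz2 with h' | h'
        · linarith
        · exact b2 ⟨(hy'.1.trans_lt this).le, h'⟩
  have hpres : ∀ γ ∈ Γ, ∀ y ∈ Set.Icc p q, γ y ∈ Set.Icc p q := by
    intro γ hγ y hy
    have h1 := γ.monotone hy.1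
    have h2 := γ.monotone hy.2
    rw [hp γ hγ] at h1
    rw [hq γ hγ] at h2
    exact ⟨h1, h2⟩
  refine ⟨t, ht, ?_⟩
  intro k hk u hu v hv
  obtain ⟨k, rfl⟩ := Nat.exists_eq_add_of_le' hk
  set w := t ^ (k + 1) * v * (t ^ (k + 1))⁻¹ with hw
  have hwΓ : w ∈ Γ := mul_mem (mul_mem (hpowmem _) (hK hv)) (inv_mem (hpowmem _))
  have huΓ := hK hu
  have hone : ∀ y ∈ Set.Icc p q, u y = y ∨ w y = y := by
    intro y hy
    by_contra hcon
    push Not at hcon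
    obtain ⟨h1, h2⟩ := hcon
    rcases hcov y hy with ⟨c, hc, hyc⟩ | h
    · have hy' := hpres _ (inv_mem (hpowmem (k + 1))) y hy
      rcases hcov _ hy' with ⟨d, hd, hyd⟩ | h
      · refine hdis k d hd c hc _ hyd ?_
        rwa [RelIso.apply_inv_self]
      · apply h2
        rw [hw, RelIso.mul_apply, RelIso.mul_apply, h v hv, RelIso.apply_inv_self]
    · exact h1 (h u hu)
  have hcom : ∀ y ∈ Set.Icc p q, u (w y) = w (u y) := by
    intro y hy
    by_cases h1 : u y = y
    · by_cases h2 : w y = y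
      · rw [h1, h2, h1]
      · rcases hone _ (hpres w hwΓ y hy) with h3 | h3
        · rw [h3, h1]
        · exact absurd (w.injective h3) h2
    · have h2 : w y = y := (hone y hy).resolve_left h1
      rcases hone _ (hpres u huΓ y hy) with h3 | h3
      · exact absurd (u.injective h3) h1
      · rw [h3, h2]
  have h1 : u * w * u⁻¹ * w⁻¹ = 1 := by
    refine hfaith _ (mul_mem (mul_mem (mul_mem huΓ hwΓ) (inv_mem huΓ)) (inv_mem hwΓ)) ?_
    intro y hy
    have hy' : u⁻¹ (w⁻¹ y) ∈ Set.Icc p q :=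
      hpres _ (inv_mem huΓ) _ (hpres _ (inv_mem hwΓ) _ hy)
    rw [RelIso.mul_apply, RelIso.mul_apply, RelIso.mul_apply, hcom _ hy',
      RelIso.apply_inv_self, RelIso.apply_inv_self]
  show u * w = w * u
  have h2 : u * w = (u * w * u⁻¹ * w⁻¹) * (w * u) := by group
  rw [h2, h1, one_mul]

/-! ### Germs of piecewise linear homeomorphisms -/

/-- `f` has one-sided linear germs at every point. -/
def HasPLGerm (f : ℝ ≃o ℝ) : Prop :=
  ∀ z, ∃ l m : ℝ, 0 < l ∧ 0 < m ∧
    ∀ᶠ y in nhds z, f y = f z + (if z ≤ y then l else m) * (y - z)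

theorem HasPLGerm.one : HasPLGerm 1 := by
  intro z
  refine ⟨1, 1, one_pos, one_pos, Filter.Eventually.of_forall fun y => ?_⟩
  simp

theorem HasPLGerm.mul {f g : ℝ ≃o ℝ} (hf : HasPLGerm f) (hg : HasPLGerm g) :
    HasPLGerm (f * g) := by
  intro z
  obtain ⟨l, m, hl, hm, h⟩ := hg z
  obtain ⟨l', m', hl', hm', h'⟩ := hf (g z)
  refine ⟨l' * l, m' * m, mul_pos hl' hl, mul_pos hm' hm, ?_⟩
  have hc : Filter.Tendsto g (nhds z) (nhds (g z)) := g.continuous.continuousAt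
  filter_upwards [h, hc.eventually h'] with y h1 h2
  rw [RelIso.mul_apply, RelIso.mul_apply, h2]
  simp only [g.le_iff_le]
  split_ifs at h1 ⊢ <;> rw [h1] <;> ring

theorem HasPLGerm.inv {f : ℝ ≃o ℝ} (hf : HasPLGerm f) : HasPLGerm f⁻¹ := by
  intro z
  obtain ⟨l, m, hl, hm, h⟩ := hf (f⁻¹ z)
  refine ⟨l⁻¹, m⁻¹, inv_pos.mpr hl, inv_pos.mpr hm, ?_⟩
  have hc : Filter.Tendsto (f⁻¹ : ℝ ≃o ℝ) (nhds z) (nhds ((f⁻¹ : ℝ ≃o ℝ) z)) :=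
    (f⁻¹ : ℝ ≃o ℝ).continuous.continuousAt
  filter_upwards [hc.eventually h] with y h1
  rw [RelIso.apply_inv_self, RelIso.apply_inv_self] at h1
  simp only [(f⁻¹ : ℝ ≃o ℝ).le_iff_le] at h1
  split_ifs at h1 ⊢ <;> field_simp <;> linarith

theorem germ_commutator_trivial (Γ : Subgroup (ℝ ≃o ℝ)) (hΓ : ∀ γ ∈ Γ, HasPLGerm γ) (z : ℝ)
    (hz : ∀ γ ∈ Γ, γ z = z) (u : ℝ ≃o ℝ) (hu : u ∈ ⁅Γ, Γ⁆) : ∀ᶠ y in nhds z, u y = y := by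
  rw [Subgroup.commutator_def] at hu
  induction hu using Subgroup.closure_induction with
  | mem x hx =>
    obtain ⟨a, ha, b, hb, rfl⟩ := hx
    have hca : ∀ γ ∈ Γ, Filter.Tendsto γ (nhds z) (nhds z) := by
      intro γ hγ
      have : Filter.Tendsto γ (nhds z) (nhds (γ z)) := γ.continuous.continuousAt
      rwa [hz γ hγ] at this
    obtain ⟨l, m, hl, hm, h⟩ := hΓ a ha z
    obtain ⟨l', m', hl', hm', h'⟩ := hΓ b hb z
    rw [hz a ha] at h
    rw [hz b hb] at h'
    have hcom : ∀ᶠ y in nhds z, a (b y) = b (a y) := by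
      filter_upwards [h, h', (hca b hb).eventually h, (hca a ha).eventually h'] with y h1 h2 h3 h4
      have e1 : z ≤ b y ↔ z ≤ y := by
        conv_lhs => rw [← hz b hb]
        exact b.le_iff_le
      have e2 : z ≤ a y ↔ z ≤ y := by
        conv_lhs => rw [← hz a ha]
        exact a.le_iff_le
      rw [h3, h4]
      simp only [e1, e2]
      split_ifs at h1 h2 ⊢ <;> rw [h1, h2] <;> ring
    have ht := (hca _ (inv_mem ha)).comp (hca _ (inv_mem hb))
    filter_upwards [ht.eventually hcom] with y hy
    simp only [Function.comp_apply] at hy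
    rw [commutatorElement_def, RelIso.mul_apply, RelIso.mul_apply, RelIso.mul_apply, hy,
      RelIso.apply_inv_self, RelIso.apply_inv_self]
  | one => exact Filter.Eventually.of_forall fun y => rfl
  | mul x y _ _ ihx ihy =>
    filter_upwards [ihx, ihy] with w h1 h2
    rw [RelIso.mul_apply, h2, h1]
  | inv x _ ih =>
    filter_upwards [ih] with w h1
    conv_lhs => rw [← h1]
    exact RelIso.inv_apply_self _ _

/-! ### Locality of the elements of `G_ρ` -/

/-- `f` moves points by at most `R`, and commutes at `y` with an integer translation that
preserves the labels in a window of radius `R` around `2 * y`. -/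
def IsLocal (ρ : ℤ → Letter) (f : ℝ ≃o ℝ) (R : ℝ) : Prop :=
  (∀ y, |f y - y| ≤ R) ∧
    ∀ (y : ℝ) (e : ℤ), (∀ m : ℤ, |(m : ℝ) - 2 * y| ≤ R → ρ (m + 2 * e) = ρ m) →
      f (y + e) = f y + e

theorem IsLocal.nonneg {ρ : ℤ → Letter} {f : ℝ ≃o ℝ} {R : ℝ} (h : IsLocal ρ f R) : 0 ≤ R :=
  (abs_nonneg _).trans (h.1 0)

theorem IsLocal.mono {ρ : ℤ → Letter} {f : ℝ ≃o ℝ} {R R' : ℝ} (h : IsLocal ρ f R)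
    (hR : R ≤ R') : IsLocal ρ f R' :=
  ⟨fun y => (h.1 y).trans hR, fun y e hw => h.2 y e fun m hm => hw m (hm.trans hR)⟩

theorem IsLocal.mul {ρ : ℤ → Letter} {f g : ℝ ≃o ℝ} {R : ℝ} (hf : IsLocal ρ f R)
    (hg : IsLocal ρ g R) : IsLocal ρ (f * g) (3 * R) := by
  have hR := hf.nonneg
  refine ⟨fun y => ?_, fun y e hw => ?_⟩
  · rw [RelIso.mul_apply]
    have h1 := hf.1 (g y)
    have h2 := hg.1 y
    rw [abs_le] at *
    constructor <;> linarith [h1.1, h1.2, h2.1, h2.2]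
  · rw [RelIso.mul_apply, RelIso.mul_apply, hg.2 y e fun m hm => hw m (by linarith),
      hf.2 (g y) e]
    intro m hm
    apply hw
    have h2 := hg.1 y
    rw [abs_le] at *
    constructor <;> linarith [hm.1, hm.2, h2.1, h2.2]

theorem IsLocal.inv {ρ : ℤ → Letter} {f : ℝ ≃o ℝ} {R : ℝ} (hf : IsLocal ρ f R) :
    IsLocal ρ f⁻¹ (3 * R) := by
  have hR := hf.nonneg
  have hd : ∀ y, |(f⁻¹ : ℝ ≃o ℝ) y - y| ≤ R := by
    intro y
    have := hf.1 ((f⁻¹ : ℝ ≃o ℝ) y)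
    rw [RelIso.apply_inv_self] at this
    rwa [abs_sub_comm]
  refine ⟨fun y => (hd y).trans (by linarith), fun y e hw => ?_⟩
  have h1 := hf.2 ((f⁻¹ : ℝ ≃o ℝ) y) e (by
    intro m hm
    apply hw
    have h2 := hd y
    rw [abs_le] at *
    constructor <;> linarith [hm.1, hm.2, h2.1, h2.2])
  rw [RelIso.apply_inv_self] at h1
  rw [← h1, RelIso.inv_apply_self]

/-! ### The generators -/

theorem ThompsonF.right_germ {f : ℝ ≃o ℝ} (hf : InThompsonF f) (u : ℝ) (h0 : 0 ≤ u) (h1 : u < 1) :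
    ∃ l : ℝ, 0 < l ∧ ∃ ε > 0, ∀ s, 0 ≤ s → s ≤ ε → f (u + s) = f u + l * s := by
  obtain ⟨-, m, x, hx0, hx1, -, -, hlin⟩ := hf
  have : ∃ i : Fin m, x i.castSucc ≤ u ∧ u < x i.succ := by
    by_contra hcon
    push Not at hcon
    have hall : ∀ i, x i ≤ u := fun i => by
      induction i using Fin.induction with
      | zero => rw [hx0]; exact h0
      | succ i ih => exact hcon i ih
    have := hall (Fin.last m)
    linarith
  obtain ⟨i, ha, hb⟩ := this
  obtain ⟨k, c, hk⟩ := hlin i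
  refine ⟨2 ^ k, by positivity, x i.succ - u, by linarith, fun s hs hs' => ?_⟩
  rw [hk (u + s) ⟨by linarith, by linarith⟩, hk u ⟨ha, hb.le⟩]
  ring

theorem ThompsonF.left_germ {f : ℝ ≃o ℝ} (hf : InThompsonF f) (u : ℝ) (h0 : 0 < u) (h1 : u ≤ 1) :
    ∃ l : ℝ, 0 < l ∧ ∃ ε > 0, ∀ s, 0 ≤ s → s ≤ ε → f (u - s) = f u - l * s := by
  obtain ⟨-, m, x, hx0, hx1, -, -, hlin⟩ := hf
  have : ∃ i : Fin m, x i.castSucc < u ∧ u ≤ x i.succ := by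
    by_contra hcon
    push Not at hcon
    have hall : ∀ i, x i < u := fun i => by
      induction i using Fin.induction with
      | zero => rw [hx0]; exact h0
      | succ i ih => exact hcon i ih
    have := hall (Fin.last m)
    linarith
  obtain ⟨i, ha, hb⟩ := this
  obtain ⟨k, c, hk⟩ := hlin i
  refine ⟨2 ^ k, by positivity, u - x i.castSucc, by linarith, fun s hs hs' => ?_⟩
  rw [hk (u - s) ⟨by linarith, by linarith⟩, hk u ⟨ha.le, hb⟩]
  ring

/-- A common form for the generators `ζ` and `χ`. -/
def IsGen (ρ : ℤ → Letter) (f : ℝ ≃o ℝ) : Prop :=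
  ∃ (ν : ℝ ≃o ℝ) (o : ℝ) (j : ℤ) (l₁ l₂ : Letter), InH ν ∧ (j : ℝ) = 2 * o + 1 ∧
    (∀ n : ℤ, ρ (2 * n + j) = l₁ ∨ ρ (2 * n + j) = l₂) ∧
    ∀ n : ℤ, ∀ x, (n : ℝ) + o ≤ x → x ≤ n + o + 1 →
      (ρ (2 * n + j) = l₁ → f x = (n + o) + ν (x - (n + o))) ∧
      (ρ (2 * n + j) = l₂ → f x = (n + o + 1) - ν ((n + o + 1) - x))

theorem IsZeta.isGen {ρ : ℤ → Letter} (hρ : IsLabelling ρ) {ν f : ℝ ≃o ℝ} (hν : InH ν)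
    (h : IsZeta ρ ν f) : IsGen ρ f := by
  refine ⟨ν, 0, 1, .b, .B, hν, by norm_num, fun n => (hρ _).2 ⟨n, rfl⟩, fun n x h1 h2 => ?_⟩
  have := h n x ⟨by linarith, by linarith⟩
  simpa using this

theorem IsChi.isGen {ρ : ℤ → Letter} (hρ : IsLabelling ρ) {ν f : ℝ ≃o ℝ} (hν : InH ν)
    (h : IsChi ρ ν f) : IsGen ρ f := by
  refine ⟨ν, -1/2, 0, .a, .A, hν, by norm_num, fun n => (hρ _).1 ⟨n, by ring⟩,
    fun n x h1 h2 => ?_⟩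
  have := h n x ⟨by linarith, by linarith⟩
  have e1 : (n : ℝ) + -1/2 = n - 1/2 := by ring
  have e2 : (n : ℝ) - 1/2 + 1 = n + 1/2 := by ring
  rw [add_zero, e1, e2]
  exact this

theorem InH.maps {ν : ℝ ≃o ℝ} (h : InH ν) {u : ℝ} (h0 : 0 ≤ u) (h1 : u ≤ 1) :
    0 ≤ ν u ∧ ν u ≤ 1 := by
  obtain ⟨-, k, ε, hε, ha, hb⟩ := h
  have e0 : ν 0 = 0 := by simpa using ha 0 ⟨le_rfl, hε.le⟩
  have e1 : ν 1 = 1 := by simpa using hb 1 ⟨by linarith, le_rfl⟩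
  have := ν.monotone h0
  have := ν.monotone h1
  constructor <;> linarith

theorem IsGen.isLocal {ρ : ℤ → Letter} {f : ℝ ≃o ℝ} (h : IsGen ρ f) : IsLocal ρ f 1 := by
  obtain ⟨ν, o, j, l₁, l₂, hν, hj, hl, hf⟩ := h
  refine ⟨fun y => ?_, fun y e hw => ?_⟩
  · have ha := Int.floor_le (y - o)
    have hb := Int.lt_floor_add_one (y - o)
    set n := ⌊y - o⌋
    have := hf n y (by linarith) (by linarith)
    rcases hl n with h | h
    · rw [this.1 h]
      have := hν.maps (u := y - (n + o)) (by linarith) (by linarith)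
      rw [abs_le]; constructor <;> linarith [this.1, this.2]
    · rw [this.2 h]
      have := hν.maps (u := (n + o + 1) - y) (by linarith) (by linarith)
      rw [abs_le]; constructor <;> linarith [this.1, this.2]
  · have ha := Int.floor_le (y - o)
    have hb := Int.lt_floor_add_one (y - o)
    set n := ⌊y - o⌋
    have h1 := hf n y (by linarith) (by linarith)
    have h2 := hf (n + e) (y + e) (by push_cast; linarith) (by push_cast; linarith)
    have h3 := hw (2 * n + j) (by
      push_cast
      rw [hj, abs_le]; constructor <;> linarith)
    have h4 : 2 * (n + e) + j = 2 * n + j + 2 * e := by ring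
    rw [h4, h3] at h2
    rcases hl n with h | h
    · rw [h1.1 h, h2.1 h]
      push_cast
      have : y + (e : ℝ) - (n + e + o) = y - (n + o) := by ring
      rw [this]; ring
    · rw [h1.2 h, h2.2 h]
      push_cast
      have : (n + e + o + 1) - (y + (e : ℝ)) = n + o + 1 - y := by ring
      rw [this]; ring

theorem IsGen.hasPLGerm {ρ : ℤ → Letter} {f : ℝ ≃o ℝ} (h : IsGen ρ f) : HasPLGerm f := by
  obtain ⟨ν, o, j, l₁, l₂, hν, hj, hl, hf⟩ := h
  intro z
  have hr : ∃ l : ℝ, 0 < l ∧ ∃ ε > 0, ∀ s, 0 ≤ s → s ≤ ε → f (z + s) = f z + l * s := by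
    have ha := Int.floor_le (z - o)
    have hb := Int.lt_floor_add_one (z - o)
    set n := ⌊z - o⌋
    have h0 := hf n z (by linarith) (by linarith)
    rcases hl n with h | h
    · obtain ⟨l, hl0, ε, hε, hg⟩ := ThompsonF.right_germ hν.1 (z - (n + o)) (by linarith)
        (by linarith)
      refine ⟨l, hl0, min ε (n + o + 1 - z), lt_min hε (by linarith), fun s hs hs' => ?_⟩
      have h1 := hs'.trans (min_le_left _ _)
      have h2 := hs'.trans (min_le_right _ _)
      rw [(hf n (z + s) (by linarith) (by linarith)).1 h, h0.1 h]
      have e : z + s - (n + o) = z - (n + o) + s := by ring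
      rw [e, hg s hs h1]; ring
    · obtain ⟨l, hl0, ε, hε, hg⟩ := ThompsonF.left_germ hν.1 (n + o + 1 - z) (by linarith)
        (by linarith)
      refine ⟨l, hl0, min ε (n + o + 1 - z), lt_min hε (by linarith), fun s hs hs' => ?_⟩
      have h1 := hs'.trans (min_le_left _ _)
      have h2 := hs'.trans (min_le_right _ _)
      rw [(hf n (z + s) (by linarith) (by linarith)).2 h, h0.2 h]
      have e : n + o + 1 - (z + s) = n + o + 1 - z - s := by ring
      rw [e, hg s hs h1]; ring
  have hlft : ∃ l : ℝ, 0 < l ∧ ∃ ε > 0, ∀ s, 0 ≤ s → s ≤ ε → f (z - s) = f z - l * s := by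
    have ha := Int.le_ceil (z - o)
    have hb := Int.ceil_lt_add_one (z - o)
    obtain ⟨n, hn⟩ : ∃ n : ℤ, ⌈z - o⌉ = n + 1 := ⟨⌈z - o⌉ - 1, by ring⟩
    rw [hn] at ha hb
    push_cast at ha hb
    have h0 := hf n z (by linarith) (by linarith)
    rcases hl n with h | h
    · obtain ⟨l, hl0, ε, hε, hg⟩ := ThompsonF.left_germ hν.1 (z - (n + o)) (by linarith)
        (by linarith)
      refine ⟨l, hl0, min ε (z - (n + o)), lt_min hε (by linarith), fun s hs hs' => ?_⟩
      have h1 := hs'.trans (min_le_left _ _)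
      have h2 := hs'.trans (min_le_right _ _)
      rw [(hf n (z - s) (by linarith) (by linarith)).1 h, h0.1 h]
      have e : z - s - (n + o) = z - (n + o) - s := by ring
      rw [e, hg s hs h1]; ring
    · obtain ⟨l, hl0, ε, hε, hg⟩ := ThompsonF.right_germ hν.1 (n + o + 1 - z) (by linarith)
        (by linarith)
      refine ⟨l, hl0, min ε (z - (n + o)), lt_min hε (by linarith), fun s hs hs' => ?_⟩
      have h1 := hs'.trans (min_le_left _ _)
      have h2 := hs'.trans (min_le_right _ _)
      rw [(hf n (z - s) (by linarith) (by linarith)).2 h, h0.2 h]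
      have e : n + o + 1 - (z - s) = n + o + 1 - z + s := by ring
      rw [e, hg s hs h1]; ring
  obtain ⟨l, hl0, ε, hε, hr⟩ := hr
  obtain ⟨m, hm0, ε', hε', hlft⟩ := hlft
  refine ⟨l, m, hl0, hm0, ?_⟩
  filter_upwards [Icc_mem_nhds (by linarith : z - ε' < z) (by linarith : z < z + ε)] with y hy
  split_ifs with hc
  · have := hr (y - z) (by linarith) (by linarith [hy.2])
    rwa [add_sub_cancel] at this
  · have := hlft (z - y) (by linarith) (by linarith [hy.1])
    rw [sub_sub_cancel] at this
    rw [this]; ring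

/-! ### Recurrence -/

theorem Letter.finite : Finite Letter := by
  apply Finite.of_surjective (fun i : Fin 4 => ![Letter.a, Letter.b, Letter.A, Letter.B] i)
  intro l
  cases l
  · exact ⟨0, rfl⟩
  · exact ⟨1, rfl⟩
  · exact ⟨2, rfl⟩
  · exact ⟨3, rfl⟩

theorem even_shift {ρ : ℤ → Letter} (hρ : IsLabelling ρ) {k d : ℤ} (h : ρ (k + d) = ρ k) :
    ∃ e : ℤ, d = 2 * e := by
  rcases Int.even_or_odd d with ⟨e, he⟩ | hd
  · exact ⟨e, by omega⟩
  · exfalso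
    rcases Int.even_or_odd k with hk | hk
    · have h1 := (hρ k).1 hk
      have h2 := (hρ (k + d)).2 (hk.add_odd hd)
      rw [h] at h2
      rcases h1 with h1 | h1 <;> rcases h2 with h2 | h2 <;> rw [h1] at h2 <;> cases h2
    · have h1 := (hρ k).2 hk
      have h2 := (hρ (k + d)).1 (hk.add_odd hd)
      rw [h] at h2
      rcases h1 with h1 | h1 <;> rcases h2 with h2 | h2 <;> rw [h1] at h2 <;> cases h2

theorem blockWord_eq (ρ : ℤ → Letter) (k : ℤ) (n : ℕ) :
    blockWord ρ k n = (List.range (n + 1)).map (fun i : ℕ => ρ (k + (i : ℤ))) := by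
  unfold blockWord
  generalize List.range (n + 1) = l
  induction l with
  | nil => rfl
  | cons a l ih =>
    have : (do let a ← a :: l; pure (a : ℤ) : List ℤ) = (a : ℤ) :: (do let a ← l; pure (a : ℤ)) := by
      simp
    rw [this, List.map_cons, List.map_cons, ih]

theorem infix_blockWord {ρ : ℤ → Letter} {k k' : ℤ} {n n' : ℕ}
    (h : (blockWord ρ k n) <:+: (blockWord ρ k' n')) :
    ∃ i : ℕ, i ≤ n' ∧ ∀ j : ℕ, j ≤ n → ρ (k' + i + j) = ρ (k + j) := by
  obtain ⟨s, t, hst⟩ := h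
  have hlen := congrArg List.length hst
  simp only [blockWord_eq, List.length_append, List.length_map, List.length_range] at hlen
  refine ⟨s.length, by omega, fun j hj => ?_⟩
  have h1 : (s ++ blockWord ρ k n ++ t)[s.length + j]? = some (ρ (k + j)) := by
    rw [List.append_assoc, List.getElem?_append_right (by omega), Nat.add_sub_cancel_left,
      List.getElem?_append_left (by simp [blockWord_eq]; omega)]
    simp [blockWord_eq, List.getElem?_range (show j < n + 1 by omega)]
  rw [hst] at h1
  simp only [blockWord_eq, List.getElem?_map,
    List.getElem?_range (show s.length + j < n' + 1 by omega), Option.map_some,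
    Option.some.injEq] at h1
  rw [← h1]
  congr 1
  push_cast
  ring

/-- Windows: any integer within `W` of `c` is of the form `⌊c - W⌋ + j` with `j ≤ n`. -/
theorem window_index {c W : ℝ} {n : ℕ} (hn : 2 * W + 1 ≤ n) {m : ℤ} (hm : |(m : ℝ) - c| ≤ W) :
    ∃ j : ℕ, j ≤ n ∧ m = ⌊c - W⌋ + j := by
  rw [abs_le] at hm
  have h1 : ⌊c - W⌋ ≤ m := by
    have : ((⌊c - W⌋ : ℤ) : ℝ) ≤ m := (Int.floor_le _).trans (by linarith [hm.1])
    exact_mod_cast this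
  refine ⟨(m - ⌊c - W⌋).toNat, ?_, by omega⟩
  have h2 : m - ⌊c - W⌋ ≤ n := by
    have h3 := Int.lt_floor_add_one (c - W)
    have : ((m - ⌊c - W⌋ : ℤ) : ℝ) ≤ n := by
      push_cast
      linarith [hm.2]
    exact_mod_cast this
  omega

/-- Global fixed points of a locally determined finitely generated group are relatively dense. -/
theorem exists_dense_fixed {ρ : ℤ → Letter} (hρ : IsQuasiPeriodic ρ) (S : Set (ℝ ≃o ℝ)) (R : ℝ)
    (hS : ∀ s ∈ S, IsLocal ρ s R) (x : ℝ) (hx : ∀ s ∈ S, s x = x) :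
    ∃ M : ℝ, 0 ≤ M ∧ ∀ y : ℝ, ∃ p, y ≤ p ∧ p ≤ y + M ∧ ∀ s ∈ S, s p = p := by
  obtain ⟨n, hn⟩ := exists_nat_ge (2 * R + 1)
  set k := ⌊2 * x - R⌋ with hk
  obtain ⟨N, hN⟩ := hρ.2.1 k n
  refine ⟨N + 1, by positivity, fun y => ?_⟩
  obtain ⟨i, hi, hw⟩ := infix_blockWord (hN (k + ⌈2 * y - 2 * x⌉) N (by omega))
  obtain ⟨e, he⟩ := even_shift (k := k) (d := ⌈2 * y - 2 * x⌉ + i) hρ.1 (by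
    have := hw 0 (Nat.zero_le _)
    simpa [add_assoc] using this)
  have he' : ((⌈2 * y - 2 * x⌉ : ℤ) : ℝ) + i = 2 * e := by exact_mod_cast he
  have h1 := Int.le_ceil (2 * y - 2 * x)
  have h2 := Int.ceil_lt_add_one (2 * y - 2 * x)
  have hi' : (i : ℝ) ≤ N := by exact_mod_cast hi
  have hi0 : (0 : ℝ) ≤ i := by positivity
  refine ⟨x + e, by linarith, by linarith, fun s hs => ?_⟩
  rw [(hS s hs).2 x e, hx s hs]
  intro m hm
  obtain ⟨j, hj, rfl⟩ := window_index hn hm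
  have := hw j hj
  rw [← hk, ← this]
  congr 1
  omega

theorem closure_fix {S : Set (ℝ ≃o ℝ)} {p : ℝ} (h : ∀ s ∈ S, s p = p) :
    ∀ γ ∈ Subgroup.closure S, γ p = p := by
  intro γ hγ
  induction hγ using Subgroup.closure_induction with
  | mem s hs => exact h s hs
  | one => rfl
  | mul a b _ _ iha ihb => rw [RelIso.mul_apply, ihb, iha]
  | inv a _ ih =>
    conv_lhs => rw [← ih]
    exact RelIso.inv_apply_self _ _

/-- Every orbit is a translate of an orbit meeting a fixed bounded region. -/
theorem exists_bounded_region {ρ : ℤ → Letter} (hρ : IsQuasiPeriodic ρ) (S : Set (ℝ ≃o ℝ)) (R : ℝ)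
    (hS : ∀ s ∈ S, IsLocal ρ s R) (M : ℝ) (hM0 : 0 ≤ M)
    (hM : ∀ y : ℝ, ∃ p, y ≤ p ∧ p ≤ y + M ∧ ∀ s ∈ S, s p = p) :
    ∃ B : ℝ, ∀ y : ℝ, ∃ e : ℤ, |y + e| ≤ B ∧ ∀ γ ∈ Subgroup.closure S, γ (y + e) = γ y + e := by
  have := Letter.finite
  set W := R + 2 * M with hW
  obtain ⟨n, hn⟩ := exists_nat_ge (2 * W + 1)
  let word : ℤ → (Fin (n + 1) → Letter) := fun k j => ρ (k + (j : ℕ))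
  let F : (Fin (n + 1) → Letter) → ℤ := Function.invFun word
  have hF : ∀ k, word (F (word k)) = word k := fun k => Function.invFun_eq ⟨k, rfl⟩
  obtain ⟨B, hB⟩ := Finite.exists_le (fun w => |(F w : ℝ)|)
  refine ⟨B + |W| + 1, fun y => ?_⟩
  set k := ⌊2 * y - W⌋ with hk
  have hw : ∀ j : ℕ, j ≤ n → ρ (F (word k) + j) = ρ (k + j) := by
    intro j hj
    exact congrFun (hF k) ⟨j, by omega⟩
  obtain ⟨e, he⟩ := even_shift (k := k) (d := F (word k) - k) hρ.1 (by
    have := hw 0 (Nat.zero_le _)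
    simpa using this)
  have he' : (F (word k) : ℝ) - k = 2 * e := by exact_mod_cast he
  have hBk := hB (word k)
  have h1 := Int.floor_le (2 * y - W)
  have h2 := Int.lt_floor_add_one (2 * y - W)
  rw [← hk] at h1 h2
  refine ⟨e, ?_, ?_⟩
  · have h3 := neg_abs_le W
    have h4 := le_abs_self W
    have hB0 : 0 ≤ B := (abs_nonneg _).trans hBk
    rw [abs_le] at hBk ⊢
    constructor <;> linarith [hBk.1, hBk.2]
  · obtain ⟨Q, hyQ, hQ, hfQ⟩ := hM y
    obtain ⟨P, hP, hPy, hfP⟩ := hM (y - M)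
    have hfQ := closure_fix hfQ
    have hfP := closure_fix hfP
    have hpres : ∀ γ ∈ Subgroup.closure S, ∀ z, P ≤ z → z ≤ Q → P ≤ γ z ∧ γ z ≤ Q := by
      intro γ hγ z h1 h2
      have a := γ.monotone h1
      have b := γ.monotone h2
      rw [hfP γ hγ] at a
      rw [hfQ γ hγ] at b
      exact ⟨a, b⟩
    have key : ∀ γ ∈ Subgroup.closure S, ∀ z, P ≤ z → z ≤ Q → γ (z + e) = γ z + e := by
      intro γ hγ
      induction hγ using Subgroup.closure_induction with
      | mem s hs =>
        intro z hz1 hz2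
        apply (hS s hs).2
        intro m hm
        obtain ⟨j, hj, rfl⟩ := window_index (c := 2 * y) hn (m := m) (by
          rw [abs_le] at *
          constructor <;> linarith [hm.1, hm.2])
        rw [← hk, ← hw j hj]
        congr 1
        omega
      | one => intro z _ _; rfl
      | mul a b ha hb iha ihb =>
        intro z hz1 hz2
        have := hpres b hb z hz1 hz2
        rw [RelIso.mul_apply, RelIso.mul_apply, ihb z hz1 hz2, iha _ this.1 this.2]
      | inv a ha ih =>
        intro z hz1 hz2
        have h3 := hpres a⁻¹ (inv_mem ha) z hz1 hz2
        have h4 := ih _ h3.1 h3.2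
        rw [RelIso.apply_inv_self] at h4
        rw [← h4, RelIso.inv_apply_self]
    exact fun γ hγ => key γ hγ y (by linarith) hyQ

/-- Commuting conjugates for subgroups with a global fixed point. -/
theorem commuting_conjugates_of_fixed {ρ : ℤ → Letter} (hρ : IsQuasiPeriodic ρ)
    (Γ : Subgroup (ℝ ≃o ℝ)) (hloc : ∀ γ ∈ Γ, ∃ R, IsLocal ρ γ R) (hpl : ∀ γ ∈ Γ, HasPLGerm γ)
    (x : ℝ) (hx : ∀ γ ∈ Γ, γ x = x) (T : Set (ℝ ≃o ℝ)) (hT : T.Finite) (hTΓ : ∀ u ∈ T, u ∈ ⁅Γ, Γ⁆) :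
    ∃ t ∈ Γ, ∀ k : ℕ, 1 ≤ k → ∀ u ∈ Subgroup.closure T, ∀ v ∈ Subgroup.closure T,
      Commute u (t ^ k * v * (t ^ k)⁻¹) := by
  have hex : ∃ S : Set (ℝ ≃o ℝ), S.Finite ∧ S ⊆ Γ ∧
      ∀ u ∈ T, u ∈ ⁅Subgroup.closure S, Subgroup.closure S⁆ := by
    have : ∀ u : T, ∃ S : Set (ℝ ≃o ℝ), S.Finite ∧ S ⊆ Γ ∧
        (u : ℝ ≃o ℝ) ∈ ⁅Subgroup.closure S, Subgroup.closure S⁆ := fun u =>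
      mem_commutator_finite Γ (hTΓ u u.2)
    choose S hS1 hS2 hS3 using this
    have := hT.to_subtype
    refine ⟨⋃ u, S u, Set.finite_iUnion hS1, Set.iUnion_subset hS2, fun u hu => ?_⟩
    have hm := Subgroup.closure_mono (Set.subset_iUnion S ⟨u, hu⟩)
    exact Subgroup.commutator_mono hm hm (hS3 ⟨u, hu⟩)
  obtain ⟨S, hSf, hSΓ, hTS⟩ := hex
  have hcl : Subgroup.closure S ≤ Γ := (Subgroup.closure_le _).mpr hSΓ
  have hR : ∃ R, ∀ s ∈ S, IsLocal ρ s R := by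
    have := hSf.to_subtype
    choose r hr using fun s : S => hloc s (hSΓ s.2)
    obtain ⟨R, hR⟩ := Finite.exists_le r
    exact ⟨R, fun s hs => (hr ⟨s, hs⟩).mono (hR ⟨s, hs⟩)⟩
  obtain ⟨R, hR⟩ := hR
  obtain ⟨M, hM0, hM⟩ := exists_dense_fixed hρ S R hR x (fun s hs => hx s (hSΓ hs))
  obtain ⟨B, hB⟩ := exists_bounded_region hρ S R hR M hM0 hM
  obtain ⟨q, hBq, -, hq⟩ := hM B
  obtain ⟨p, -, hpB, hp⟩ := hM (-B - M)
  have hle : Subgroup.closure T ≤ ⁅Subgroup.closure S, Subgroup.closure S⁆ :=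
    (Subgroup.closure_le _).mpr hTS
  have hle' : ⁅Subgroup.closure S, Subgroup.closure S⁆ ≤ Subgroup.closure S :=
    Subgroup.commutator_le.mpr fun a ha b hb => by
      rw [commutatorElement_def]
      exact mul_mem (mul_mem (mul_mem ha hb) (inv_mem ha)) (inv_mem hb)
  obtain ⟨t, ht, h⟩ := exists_commuting_conjugator (Subgroup.closure S) (Subgroup.closure T)
    (hle.trans hle') p q (closure_fix hp) (closure_fix hq) (by
      intro γ hγ hid
      ext y
      obtain ⟨e, he, hc⟩ := hB y
      rw [abs_le] at he
      have h1 := hc γ hγ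
      rw [hid (y + e) ⟨by linarith [he.1], by linarith [he.2]⟩] at h1
      show γ y = y
      linarith) (by
      intro z hz
      have h1 : ∀ᶠ y in nhds z, ∀ u ∈ T, u y = y := by
        rw [Filter.eventually_all_finite hT]
        intro u hu
        exact germ_commutator_trivial (Subgroup.closure S) (fun γ hγ => hpl γ (hcl hγ)) z hz u
          (hTS u hu)
      filter_upwards [h1] with y hy
      exact closure_fix hy)
  exact ⟨t, hcl ht, h⟩

/-- Any subgroup of `G_ρ` with a global fixed point in `ℝ` is
2-boundedly acyclic. -/
theorem fixpoint_subgroup_two_boundedly_acyclic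
    (ρ : ℤ → Letter) (hρ : IsQuasiPeriodic ρ)
    (H : Subgroup (ℝ ≃o ℝ)) (hH : ∀ f : ℝ ≃o ℝ, f ∈ H ↔ InH f)
    (ν₁ ν₂ ν₃ : ℝ ≃o ℝ) (hgen : Subgroup.closure {ν₁, ν₂, ν₃} = H)
    (ζ₁ ζ₂ ζ₃ χ₁ χ₂ χ₃ : ℝ ≃o ℝ)
    (hζ₁ : IsZeta ρ ν₁ ζ₁) (hζ₂ : IsZeta ρ ν₂ ζ₂) (hζ₃ : IsZeta ρ ν₃ ζ₃)
    (hχ₁ : IsChi ρ ν₁ χ₁) (hχ₂ : IsChi ρ ν₂ χ₂) (hχ₃ : IsChi ρ ν₃ χ₃)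
    (G : Subgroup (ℝ ≃o ℝ))
    (hG : G = Subgroup.closure {ζ₁, ζ₂, ζ₃, χ₁, χ₂, χ₃})
    (Γ : Subgroup (ℝ ≃o ℝ)) (hΓG : Γ ≤ G)
    (hfix : ∃ x : ℝ, ∀ γ ∈ Γ, γ x = x) :
    Is2BoundedlyAcyclic ↥Γ := by
  obtain ⟨x, hx⟩ := hfix
  have hν : ∀ ν ∈ ({ν₁, ν₂, ν₃} : Set (ℝ ≃o ℝ)), InH ν := by
    intro ν hν
    rw [← hH, ← hgen]
    exact Subgroup.subset_closure hν
  have hg : ∀ f ∈ ({ζ₁, ζ₂, ζ₃, χ₁, χ₂, χ₃} : Set (ℝ ≃o ℝ)), IsGen ρ f := by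
    have n1 := hν ν₁ (by simp)
    have n2 := hν ν₂ (by simp)
    have n3 := hν ν₃ (by simp)
    rintro f (rfl | rfl | rfl | rfl | rfl | rfl)
    · exact hζ₁.isGen hρ.1 n1
    · exact hζ₂.isGen hρ.1 n2
    · exact hζ₃.isGen hρ.1 n3
    · exact hχ₁.isGen hρ.1 n1
    · exact hχ₂.isGen hρ.1 n2
    · exact hχ₃.isGen hρ.1 n3
  have hloc : ∀ γ ∈ G, ∃ R, IsLocal ρ γ R := by
    intro γ hγ
    rw [hG] at hγ
    induction hγ using Subgroup.closure_induction with
    | mem f hf => exact ⟨1, (hg f hf).isLocal⟩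
    | one => exact ⟨0, fun y => by simp, fun y e _ => rfl⟩
    | mul a b _ _ iha ihb =>
      obtain ⟨R, hR⟩ := iha
      obtain ⟨R', hR'⟩ := ihb
      exact ⟨_, (hR.mono (le_max_left R R')).mul (hR'.mono (le_max_right R R'))⟩
    | inv a _ ih =>
      obtain ⟨R, hR⟩ := ih
      exact ⟨_, hR.inv⟩
  have hpl : ∀ γ ∈ G, HasPLGerm γ := by
    intro γ hγ
    rw [hG] at hγ
    induction hγ using Subgroup.closure_induction with
    | mem f hf => exact (hg f hf).hasPLGerm
    | one => exact HasPLGerm.one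
    | mul a b _ _ iha ihb => exact iha.mul ihb
    | inv a _ ih => exact ih.inv
  apply acyclic_of_commuting_conjugates
  intro T hT hTc
  obtain ⟨t, ht, h⟩ := commuting_conjugates_of_fixed hρ Γ (fun γ hγ => hloc γ (hΓG hγ))
    (fun γ hγ => hpl γ (hΓG hγ)) x hx (Γ.subtype '' T) (hT.image _) (by
      rintro _ ⟨u, hu, rfl⟩
      have h1 : Γ.subtype u ∈ (commutator Γ).map Γ.subtype := Subgroup.mem_map_of_mem _ (hTc hu)
      rw [commutator_def, Subgroup.map_commutator] at h1
      have h2 : (⊤ : Subgroup Γ).map Γ.subtype ≤ Γ := by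
        rintro _ ⟨w, _, rfl⟩
        exact w.2
      exact Subgroup.commutator_mono h2 h2 h1)
  refine ⟨⟨t, ht⟩, fun k hk u hu v hv => ?_⟩
  have hmem : ∀ w ∈ Subgroup.closure T, Γ.subtype w ∈ Subgroup.closure (Γ.subtype '' T) := by
    intro w hw
    rw [← MonoidHom.map_closure]
    exact Subgroup.mem_map_of_mem _ hw
  have := h k hk _ (hmem u hu) _ (hmem v hv)
  apply Subtype.ext
  exact this.eq
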